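/- arXiv:1804.08776 — 12 statements merged into one kernel-verified Lean document; each statement's English description precedes it below -/
import Mathlib

section
/- Let c ≠ 0 be a real constant and g : ℝ → ℝ be continuous. Let Ω ⊆ ℝ² be open and u : Ω → ℝ be a C² solution of the equation u_t = c·u_x^{-2}·u_xx + g(u) such that u_x(t,x) ≠ 0 for all (t,x) ∈ Ω. Let v be a C² function on an open subset of ℝ² such that v(t, u(t,x)) = x for all (t,x) ∈ Ω. Then at every point of the form (t, y) = (t, u(t,x)) with (t,x) ∈ Ω, the function v satisfies the Kolmogorov equation v_t(t,y) = c·v_{yy}(t,y) − g(y)·v_y(t,y). -/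
/-!
The theorem is the chain rule applied to the identity `v(t, u(t, x)) = x`. On the open set `Ω` this
identity may be differentiated once in `t`, giving `v_t + v_y u_t = 0`, and, on the slice of
constant `t`, once and twice in `x`, giving `v_y u_x = 1` and `v_yy u_x² + v_y u_xx = 0`
(`left_inverse_deriv`). Inserting the equation for `u_t` into the first relation and eliminating
`u_xx` with the last one yields the Kolmogorov equation.
-/

/-- Partial derivative with respect to the first (time) variable. -/
noncomputable def pt (u : ℝ → ℝ → ℝ) (t x : ℝ) : ℝ := deriv (fun s => u s x) t

/-- Partial derivative with respect to the second (space) variable. -/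
noncomputable def px (u : ℝ → ℝ → ℝ) (t x : ℝ) : ℝ := deriv (fun y => u t y) x

/-- Second partial derivative with respect to the second (space) variable. -/
noncomputable def pxx (u : ℝ → ℝ → ℝ) (t x : ℝ) : ℝ :=
  deriv (fun y => deriv (fun z => u t z) y) x

open Filter Topology

/-- The derivative along any direction splits into the partial derivatives `pt` and `px`. -/
lemma fderiv_eq_partials {w : ℝ → ℝ → ℝ} {t x : ℝ}
    (hw : DifferentiableAt ℝ (fun p : ℝ × ℝ => w p.1 p.2) (t, x)) (a b : ℝ) :
    fderiv ℝ (fun p : ℝ × ℝ => w p.1 p.2) (t, x) (a, b) = a * pt w t x + b * px w t x := by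
  have h1 : HasDerivAt (fun s => w s x)
      (fderiv ℝ (fun p : ℝ × ℝ => w p.1 p.2) (t, x) (1, 0)) t :=
    HasFDerivAt.comp_hasDerivAt (f := fun s : ℝ => (s, x)) t hw.hasFDerivAt
      ((hasDerivAt_id t).prodMk (hasDerivAt_const t x))
  have h2 : HasDerivAt (fun y => w t y)
      (fderiv ℝ (fun p : ℝ × ℝ => w p.1 p.2) (t, x) (0, 1)) x :=
    HasFDerivAt.comp_hasDerivAt (f := fun y : ℝ => (t, y)) x hw.hasFDerivAt
      ((hasDerivAt_const x t).prodMk (hasDerivAt_id x))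
  have h3 : ((a, b) : ℝ × ℝ) = a • (1, 0) + b • (0, 1) := by simp
  rw [h3, map_add, map_smul, map_smul, pt, px, h1.deriv, h2.deriv, smul_eq_mul, smul_eq_mul]

lemma contDiffAt_slice {w : ℝ → ℝ → ℝ} {t x : ℝ}
    (hw : ContDiffAt ℝ 2 (fun p : ℝ × ℝ => w p.1 p.2) (t, x)) : ContDiffAt ℝ 2 (w t) x :=
  ContDiffAt.comp (f := fun y : ℝ => (t, y)) x hw (contDiffAt_const.prodMk contDiffAt_id)

/-- First and second derivative of a relation `h (f y) = y` in one variable. -/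
lemma left_inverse_deriv {f h : ℝ → ℝ} {x : ℝ} (hf : ContDiffAt ℝ 2 f x)
    (hh : ContDiffAt ℝ 2 h (f x)) (hinv : ∀ᶠ y in 𝓝 x, h (f y) = y) :
    deriv h (f x) * deriv f x = 1 ∧
      deriv (deriv h) (f x) * deriv f x * deriv f x + deriv h (f x) * deriv (deriv f) x = 0 := by
  have hf1 : ∀ᶠ y in 𝓝 x, DifferentiableAt ℝ f y :=
    (hf.eventually (by simp)).mono fun y hy => hy.differentiableAt (by simp)
  have hh1 : ∀ᶠ y in 𝓝 x, DifferentiableAt ℝ h (f y) :=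
    hf.continuousAt.eventually
      ((hh.eventually (by simp)).mono fun y hy => hy.differentiableAt (by simp))
  have key : (fun y => deriv h (f y) * deriv f y) =ᶠ[𝓝 x] fun _ => 1 := by
    filter_upwards [hf1, hh1, hinv.eventually_nhds] with y h1 h2 h3
    have h4 : HasDerivAt (fun z => h (f z)) (deriv h (f y) * deriv f y) y :=
      HasDerivAt.comp y h2.hasDerivAt h1.hasDerivAt
    exact h4.unique ((hasDerivAt_id y).congr_of_eventuallyEq h3)
  have hf2 : DifferentiableAt ℝ (deriv f) x :=
    (hf.derivWithin (m := 1) (by norm_num)).differentiableAt (by simp)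
  have hh2 : DifferentiableAt ℝ (deriv h) (f x) :=
    (hh.derivWithin (m := 1) (by norm_num)).differentiableAt (by simp)
  refine ⟨key.self_of_nhds, ?_⟩
  have h5 : HasDerivAt (fun y => deriv h (f y) * deriv f y)
      (deriv (deriv h) (f x) * deriv f x * deriv f x + deriv h (f x) * deriv (deriv f) x) x :=
    HasDerivAt.mul (HasDerivAt.comp x hh2.hasDerivAt hf1.self_of_nhds.hasDerivAt) hf2.hasDerivAt
  exact h5.unique ((hasDerivAt_const x 1).congr_of_eventuallyEq key)

/-- The hodograph transformation (t̃, x̃, ũ) = (t, u, x) maps solutions of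
`u_t = c u_x⁻² u_xx + g(u)` to solutions of the Kolmogorov equation
`v_t = c v_yy − g(y) v_y`. -/
theorem hodograph_linearization
    (c : ℝ) (hc : c ≠ 0) (g : ℝ → ℝ) (hg : Continuous g)
    (Ω : Set (ℝ × ℝ)) (hΩ : IsOpen Ω)
    (u : ℝ → ℝ → ℝ)
    (hu : ContDiffOn ℝ 2 (fun p : ℝ × ℝ => u p.1 p.2) Ω)
    (hux : ∀ p ∈ Ω, px u p.1 p.2 ≠ 0)
    (hpde : ∀ p ∈ Ω,
      pt u p.1 p.2 = c * pxx u p.1 p.2 / (px u p.1 p.2) ^ 2 + g (u p.1 p.2))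
    (Ω' : Set (ℝ × ℝ)) (hΩ' : IsOpen Ω')
    (v : ℝ → ℝ → ℝ)
    (hv : ContDiffOn ℝ 2 (fun p : ℝ × ℝ => v p.1 p.2) Ω')
    (hmem : ∀ p ∈ Ω, (p.1, u p.1 p.2) ∈ Ω')
    (hinv : ∀ p ∈ Ω, v p.1 (u p.1 p.2) = p.2) :
    ∀ p ∈ Ω,
      pt v p.1 (u p.1 p.2) =
        c * pxx v p.1 (u p.1 p.2) - g (u p.1 p.2) * px v p.1 (u p.1 p.2) := by
  rintro ⟨t, x⟩ hp
  have hU : ContDiffAt ℝ 2 (fun p : ℝ × ℝ => u p.1 p.2) (t, x) :=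
    hu.contDiffAt (hΩ.mem_nhds hp)
  have hV : ContDiffAt ℝ 2 (fun p : ℝ × ℝ => v p.1 p.2) (t, u t x) :=
    hv.contDiffAt (hΩ'.mem_nhds (hmem _ hp))
  have hev : ∀ᶠ p in 𝓝 (t, x), v p.1 (u p.1 p.2) = p.2 :=
    eventually_of_mem (hΩ.mem_nhds hp) hinv
  have hevx : ∀ᶠ y in 𝓝 x, v t (u t y) = y :=
    (Continuous.prodMk_right t).continuousAt.eventually hev
  have hevt : ∀ᶠ s in 𝓝 t, v s (u s x) = x :=
    (Continuous.prodMk_left x).continuousAt.eventually hev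
  obtain ⟨e1, e2⟩ := left_inverse_deriv (contDiffAt_slice hU) (contDiffAt_slice hV) hevx
  have ht : pt v t (u t x) + pt u t x * px v t (u t x) = 0 := by
    have h1 : HasDerivAt (fun s => u s x) (pt u t x) t :=
      (DifferentiableAt.comp (f := fun s : ℝ => (s, x)) t (hU.differentiableAt (by simp))
        (differentiableAt_id.prodMk (differentiableAt_const x))).hasDerivAt
    have hVd := hV.differentiableAt (by simp)
    have h2 : HasDerivAt (fun s => v s (u s x)) _ t :=
      HasFDerivAt.comp_hasDerivAt (f := fun s : ℝ => (s, u s x)) t hVd.hasFDerivAt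
        ((hasDerivAt_id t).prodMk h1)
    have h3 := h2.unique ((hasDerivAt_const t x).congr_of_eventuallyEq hevt)
    rw [fderiv_eq_partials hVd] at h3
    simpa using h3
  have hux' := hux _ hp
  have hpde' := hpde _ hp
  change px v t (u t x) * px u t x = 1 at e1
  change pxx v t (u t x) * px u t x * px u t x + px v t (u t x) * pxx u t x = 0 at e2
  dsimp only at hux' hpde' ⊢
  have e3 : pxx v t (u t x) = - (px v t (u t x) * pxx u t x / px u t x ^ 2) := by
    field_simp
    linear_combination e2
  rw [hpde'] at ht
  rw [e3]
  linear_combination ht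
end

section
/- Let f, f̃ : ℝ → ℝ be functions and T₀, T₁, X₀, X₁, X₂, U₀, U₁, U₂ real constants with T₁·(X₁U₂ − X₂U₁) ≠ 0. Let u : ℝ² → ℝ be a C² solution of u_t = f(u_x)·u_xx such that X₁ + X₂·u_x(t,x) ≠ 0 for all (t,x), and suppose f̃((U₁ + U₂p)/(X₁ + X₂p)) = ((X₁ + X₂p)²/T₁)·f(p) for every p in the range of u_x. Let v be a C² function on an open subset of ℝ² such that v(T₁t + T₀, X₁x + X₂·u(t,x) + X₀) = U₁x + U₂·u(t,x) + U₀ for all (t,x) ∈ ℝ². Then at every point (s, y) = (T₁t + T₀, X₁x + X₂u(t,x) + X₀), the function v satisfies v_s(s,y) = f̃(v_y(s,y))·v_{yy}(s,y). -/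
/-- The differential of a two-variable function in terms of its partial derivatives, in the form of
a chain rule along a curve with components `a`, `b`. -/
lemma hasDerivAt_comp_curve {w : ℝ → ℝ → ℝ} {a b : ℝ → ℝ} {a' b' r : ℝ}
    (hw : DifferentiableAt ℝ (fun p : ℝ × ℝ => w p.1 p.2) (a r, b r))
    (ha : HasDerivAt a a' r) (hb : HasDerivAt b b' r) :
    HasDerivAt (fun τ => w (a τ) (b τ)) (a' * pt w (a r) (b r) + b' * px w (a r) (b r)) r := by
  have hL := hw.hasFDerivAt
  set L := fderiv ℝ (fun p : ℝ × ℝ => w p.1 p.2) (a r, b r)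
  have h1 : HasDerivAt (fun s => w s (b r)) (L (1, 0)) (a r) :=
    hL.comp_hasDerivAt (f := fun s => (s, b r)) (a r)
      ((hasDerivAt_id (a r)).prodMk (hasDerivAt_const (a r) (b r)))
  have h2 : HasDerivAt (fun y => w (a r) y) (L (0, 1)) (b r) :=
    hL.comp_hasDerivAt (f := fun y => (a r, y)) (b r)
      ((hasDerivAt_const (b r) (a r)).prodMk (hasDerivAt_id (b r)))
  have h3 : HasDerivAt (fun τ => w (a τ) (b τ)) (L (a', b')) r :=
    hL.comp_hasDerivAt (f := fun τ => (a τ, b τ)) r (ha.prodMk hb)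
  have e : (a', b') = a' • ((1, 0) : ℝ × ℝ) + b' • ((0, 1) : ℝ × ℝ) := by ext <;> simp
  rw [e, map_add, map_smul, map_smul, ← h1.deriv, ← h2.deriv] at h3
  exact h3

/-- For a `C²` function of two variables, the first space derivative is differentiable in space, so
that `pxx` is a genuine derivative. -/
lemma hasDerivAt_px {w : ℝ → ℝ → ℝ} {t x : ℝ}
    (hw : ContDiffAt ℝ 2 (fun p : ℝ × ℝ => w p.1 p.2) (t, x)) :
    HasDerivAt (fun y => px w t y) (pxx w t x) x := by
  have h1 : ContDiffAt ℝ 2 (fun y => w t y) x :=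
    hw.comp (f := fun y : ℝ => (t, y)) x (by fun_prop)
  have h2 : ContDiffAt ℝ 1 (deriv (fun y => w t y)) x := by
    simpa [iteratedDeriv_one] using h1.fderiv_right (m := 1) (by norm_num) |>.clm_apply
      (contDiffAt_const (c := (1 : ℝ)))
  exact (h2.differentiableAt (by norm_num)).hasDerivAt

/-- The transformations t̃ = T₁t + T₀, x̃ = X₁x + X₂u + X₀, ũ = U₁x + U₂u + U₀,
f̃ = ((X₁ + X₂u_x)²/T₁) f constituting the usual equivalence group of the class
of nonlinear filtration equations `u_t = f(u_x) u_xx` map solutions to solutions. -/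
theorem usual_equivalence_group_F'
    (f ftil : ℝ → ℝ)
    (T₀ T₁ X₀ X₁ X₂ U₀ U₁ U₂ : ℝ) (hne : T₁ * (X₁ * U₂ - X₂ * U₁) ≠ 0)
    (u : ℝ → ℝ → ℝ)
    (hu : ContDiff ℝ 2 (fun p : ℝ × ℝ => u p.1 p.2))
    (hpde : ∀ t x, pt u t x = f (px u t x) * pxx u t x)
    (hden : ∀ t x, X₁ + X₂ * px u t x ≠ 0)
    (hftil : ∀ t x,
      ftil ((U₁ + U₂ * px u t x) / (X₁ + X₂ * px u t x)) =
        (X₁ + X₂ * px u t x) ^ 2 / T₁ * f (px u t x))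
    (Ω' : Set (ℝ × ℝ)) (hΩ' : IsOpen Ω')
    (v : ℝ → ℝ → ℝ)
    (hv : ContDiffOn ℝ 2 (fun p : ℝ × ℝ => v p.1 p.2) Ω')
    (hmem : ∀ t x, (T₁ * t + T₀, X₁ * x + X₂ * u t x + X₀) ∈ Ω')
    (hrel : ∀ t x,
      v (T₁ * t + T₀) (X₁ * x + X₂ * u t x + X₀) = U₁ * x + U₂ * u t x + U₀) :
    ∀ t x,
      pt v (T₁ * t + T₀) (X₁ * x + X₂ * u t x + X₀) =
        ftil (px v (T₁ * t + T₀) (X₁ * x + X₂ * u t x + X₀)) *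
          pxx v (T₁ * t + T₀) (X₁ * x + X₂ * u t x + X₀) := by
  intro t x
  have hu' : ∀ t x, ContDiffAt ℝ 2 (fun p : ℝ × ℝ => u p.1 p.2) (t, x) :=
    fun t x => hu.contDiffAt
  have hv' : ∀ t x, ContDiffAt ℝ 2 (fun p : ℝ × ℝ => v p.1 p.2)
      (T₁ * t + T₀, X₁ * x + X₂ * u t x + X₀) :=
    fun t x => hv.contDiffAt (hΩ'.mem_nhds (hmem t x))
  have hux : ∀ x, HasDerivAt (fun z => u t z) (px u t x) x := fun x => by
    have := hasDerivAt_comp_curve ((hu' t x).differentiableAt (by norm_num))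
      (hasDerivAt_const x t) (hasDerivAt_id x)
    simpa using this
  have hut : HasDerivAt (fun s => u s x) (pt u t x) t := by
    have := hasDerivAt_comp_curve ((hu' t x).differentiableAt (by norm_num))
      (hasDerivAt_id t) (hasDerivAt_const t x)
    simpa using this
  have hy : ∀ x, HasDerivAt (fun z => X₁ * z + X₂ * u t z + X₀) (X₁ + X₂ * px u t x) x :=
    fun x => by
      simpa using (((hasDerivAt_id x).const_mul X₁).add ((hux x).const_mul X₂)).add_const X₀
  have hvy : ∀ x, px v (T₁ * t + T₀) (X₁ * x + X₂ * u t x + X₀)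
      = (U₁ + U₂ * px u t x) / (X₁ + X₂ * px u t x) := fun x => by
    have h1 := hasDerivAt_comp_curve ((hv' t x).differentiableAt (by norm_num))
      (hasDerivAt_const x (T₁ * t + T₀)) (hy x)
    simp only [hrel] at h1
    have h2 : HasDerivAt (fun z => U₁ * z + U₂ * u t z + U₀) (U₁ + U₂ * px u t x) x := by
      simpa using (((hasDerivAt_id x).const_mul U₁).add ((hux x).const_mul U₂)).add_const U₀
    rw [eq_div_iff (hden t x)]
    linarith [h1.unique h2]
  have hD := hden t x
  have hT : T₁ ≠ 0 := left_ne_zero_of_mul hne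
  have hvyy : pxx v (T₁ * t + T₀) (X₁ * x + X₂ * u t x + X₀)
      = (X₁ * U₂ - X₂ * U₁) * pxx u t x / (X₁ + X₂ * px u t x) ^ 3 := by
    have h1 := (hasDerivAt_px (hv' t x)).comp x (hy x)
    simp only [Function.comp_def, hvy] at h1
    have hp := hasDerivAt_px (hu' t x)
    have h2 := ((hp.const_mul U₂).const_add U₁).fun_div ((hp.const_mul X₂).const_add X₁) hD
    have h3 := h1.unique h2
    rw [← eq_div_iff hD] at h3
    rw [h3]
    field_simp
    ring
  have hvt : pt v (T₁ * t + T₀) (X₁ * x + X₂ * u t x + X₀)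
      = (X₁ * U₂ - X₂ * U₁) * pt u t x / (T₁ * (X₁ + X₂ * px u t x)) := by
    have ha : HasDerivAt (fun τ => T₁ * τ + T₀) T₁ t := by
      simpa using ((hasDerivAt_id t).const_mul T₁).add_const T₀
    have hb : HasDerivAt (fun τ => X₁ * x + X₂ * u τ x + X₀) (X₂ * pt u t x) t :=
      ((hut.const_mul X₂).const_add (X₁ * x)).add_const X₀
    have h1 := hasDerivAt_comp_curve ((hv' t x).differentiableAt (by norm_num)) ha hb
    simp only [hrel, hvy] at h1
    have h2 : HasDerivAt (fun τ => U₁ * x + U₂ * u τ x + U₀) (U₂ * pt u t x) t :=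
      ((hut.const_mul U₂).const_add (U₁ * x)).add_const U₀
    have h3 := h1.unique h2
    rw [eq_div_iff (mul_ne_zero hT hD)]
    field_simp at h3
    linear_combination h3
  rw [hvt, hvy, hvyy, hftil, hpde]
  field_simp
end

section
/- For each parameter tuple θ = (T₀, T₁, X₀, X₁, X₂, U₀, U₁, U₂, U₃) of real numbers with T₁·(X₁U₂ − X₂U₁) ≠ 0, define the map Φ_θ : ℝ⁴ → ℝ⁴ by Φ_θ(t, x, u, g) = (T₁t + T₀, X₁x + X₂u − X₂gt + X₀, U₁x + U₂u + (1 − U₂)gt + U₃t + (T₀/T₁)g + U₀, (g + U₃)/T₁). Then for any two admissible parameter tuples θ and θ′ there exists an admissible parameter tuple θ″ such that Φ_{θ′} ∘ Φ_θ = Φ_{θ″}. -/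
/-! With `v = u - g t`, the map `Φ_θ` acts on `t`, on `g` and on the pair `(x, v)` by separate affine
maps: `t ↦ T₁ t + T₀`, `g ↦ (g + U₃) / T₁`, and `(x, v) ↦ (X₁ x + X₂ v + X₀, U₁ x + U₂ v + c)` with
`c = U₀ - U₃ T₀ / T₁`. Affine maps compose, the scaling of `g` stays inverse to that of `t`, and the
linear part on `(x, v)` of a composition is the product of two invertible matrices, so its
determinant is nonzero. -/

/-- The restriction to the coordinates (t, x, u, g) of a transformation from the
effective generalized equivalence group Ĝ∼_F of the class `u_t = f(u_x) u_xx + g`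
(g constant), with parameters (T₀, T₁, X₀, X₁, X₂, U₀, U₁, U₂, U₃). -/
noncomputable def Phi (T₀ T₁ X₀ X₁ X₂ U₀ U₁ U₂ U₃ : ℝ) : ℝ × ℝ × ℝ × ℝ → ℝ × ℝ × ℝ × ℝ :=
  fun q =>
    (T₁ * q.1 + T₀,
     X₁ * q.2.1 + X₂ * q.2.2.1 - X₂ * q.2.2.2 * q.1 + X₀,
     U₁ * q.2.1 + U₂ * q.2.2.1 + (1 - U₂) * q.2.2.2 * q.1 + U₃ * q.1
       + (T₀ / T₁) * q.2.2.2 + U₀,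
     (q.2.2.2 + U₃) / T₁)

/-- The family of maps Φ_θ with admissible parameters θ is closed under composition. -/
theorem Phi_comp_closed
    (T₀ T₁ X₀ X₁ X₂ U₀ U₁ U₂ U₃ : ℝ)
    (T₀' T₁' X₀' X₁' X₂' U₀' U₁' U₂' U₃' : ℝ)
    (h : T₁ * (X₁ * U₂ - X₂ * U₁) ≠ 0)
    (h' : T₁' * (X₁' * U₂' - X₂' * U₁') ≠ 0) :
    ∃ T₀'' T₁'' X₀'' X₁'' X₂'' U₀'' U₁'' U₂'' U₃'' : ℝ,
      T₁'' * (X₁'' * U₂'' - X₂'' * U₁'') ≠ 0 ∧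
      (Phi T₀' T₁' X₀' X₁' X₂' U₀' U₁' U₂' U₃') ∘
          (Phi T₀ T₁ X₀ X₁ X₂ U₀ U₁ U₂ U₃) =
        Phi T₀'' T₁'' X₀'' X₁'' X₂'' U₀'' U₁'' U₂'' U₃'' := by
  have hT : T₁ ≠ 0 := left_ne_zero_of_mul h
  have hT' : T₁' ≠ 0 := left_ne_zero_of_mul h'
  -- The witness for `U₀''` is recovered from the constant term `c''` of the new `v` via
  -- `U₀'' = c'' + U₃'' T₀'' / T₁''`.
  refine ⟨T₁' * T₀ + T₀', T₁' * T₁,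
    X₁' * X₀ + X₂' * (U₀ - U₃ * T₀ / T₁) + X₀',
    X₁' * X₁ + X₂' * U₁, X₁' * X₂ + X₂' * U₂,
    U₁' * X₀ + U₂' * (U₀ - U₃ * T₀ / T₁) + (U₀' - U₃' * T₀' / T₁')
      + (U₃ + T₁ * U₃') * (T₁' * T₀ + T₀') / (T₁' * T₁),
    U₁' * X₁ + U₂' * U₁, U₁' * X₂ + U₂' * U₂, U₃ + T₁ * U₃', ?_, ?_⟩
  · convert mul_ne_zero h' h using 1
    ring
  · funext ⟨t, x, u, g⟩
    simp only [Phi, Function.comp_apply, Prod.mk.injEq]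
    refine ⟨?_, ?_, ?_, ?_⟩ <;> field_simp <;> ring
end

section
/- For each parameter tuple θ = (T₀, T₁, X₀, X₁, X₂, U₀, U₁, U₂, U₃) of real numbers with T₁·(X₁U₂ − X₂U₁) ≠ 0, define the map Φ_θ : ℝ⁴ → ℝ⁴ by Φ_θ(t, x, u, g) = (T₁t + T₀, X₁x + X₂u − X₂gt + X₀, U₁x + U₂u + (1 − U₂)gt + U₃t + (T₀/T₁)g + U₀, (g + U₃)/T₁). Then for every admissible parameter tuple θ, the map Φ_θ is a bijection of ℝ⁴ and there exists an admissible parameter tuple θ⁻ such that Φ_{θ⁻} ∘ Φ_θ = id and Φ_θ ∘ Φ_{θ⁻} = id. -/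
/-- Each map Φ_θ with admissible parameters θ is a bijection of ℝ⁴ whose inverse
is again of the form Φ_{θ⁻} with admissible parameters θ⁻. -/
theorem Phi_inverse_closed
    (T₀ T₁ X₀ X₁ X₂ U₀ U₁ U₂ U₃ : ℝ)
    (h : T₁ * (X₁ * U₂ - X₂ * U₁) ≠ 0) :
    Function.Bijective (Phi T₀ T₁ X₀ X₁ X₂ U₀ U₁ U₂ U₃) ∧
    ∃ T₀' T₁' X₀' X₁' X₂' U₀' U₁' U₂' U₃' : ℝ,
      T₁' * (X₁' * U₂' - X₂' * U₁') ≠ 0 ∧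
      (Phi T₀' T₁' X₀' X₁' X₂' U₀' U₁' U₂' U₃') ∘
          (Phi T₀ T₁ X₀ X₁ X₂ U₀ U₁ U₂ U₃) = id ∧
      (Phi T₀ T₁ X₀ X₁ X₂ U₀ U₁ U₂ U₃) ∘
          (Phi T₀' T₁' X₀' X₁' X₂' U₀' U₁' U₂' U₃') = id := by
  have hT : T₁ ≠ 0 := left_ne_zero_of_mul h
  obtain ⟨D, hD⟩ : ∃ D, D = X₁ * U₂ - X₂ * U₁ := ⟨_, rfl⟩
  have hD0 : D ≠ 0 := hD ▸ right_ne_zero_of_mul h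
  suffices H : ∃ T₀' T₁' X₀' X₁' X₂' U₀' U₁' U₂' U₃' : ℝ,
      T₁' * (X₁' * U₂' - X₂' * U₁') ≠ 0 ∧
      (Phi T₀' T₁' X₀' X₁' X₂' U₀' U₁' U₂' U₃') ∘
          (Phi T₀ T₁ X₀ X₁ X₂ U₀ U₁ U₂ U₃) = id ∧
      (Phi T₀ T₁ X₀ X₁ X₂ U₀ U₁ U₂ U₃) ∘
          (Phi T₀' T₁' X₀' X₁' X₂' U₀' U₁' U₂' U₃') = id by
    refine ⟨?_, H⟩
    obtain ⟨_, _, _, _, _, _, _, _, _, -, hl, hr⟩ := H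
    exact Function.bijective_iff_has_inverse.mpr ⟨_, congrFun hl, congrFun hr⟩
  -- The summand `U₃ * T₀ / T₁` in `U₀'` is `U₃' * T₀' / T₁'`, which turns the constant of the
  -- inverse `w`-component back into the parameter `U₀'`.
  refine ⟨-T₀ / T₁, 1 / T₁,
    -(U₂ * X₀ - X₂ * (U₀ - U₃ * T₀ / T₁)) / D, U₂ / D, -X₂ / D,
    -(X₁ * (U₀ - U₃ * T₀ / T₁) - U₁ * X₀) / D + U₃ * T₀ / T₁, -U₁ / D, X₁ / D,
    -U₃ / T₁, ?_, ?_, ?_⟩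
  · have hdet : U₂ / D * (X₁ / D) - -X₂ / D * (-U₁ / D) = 1 / D := by
      field_simp
      linear_combination -hD
    rw [hdet]
    positivity
  · funext ⟨t, x, u, g⟩
    simp only [Phi, Function.comp_apply, id_eq, Prod.mk.injEq]
    refine ⟨?_, ?_, ?_, ?_⟩ <;> field_simp <;> (try subst hD) <;> ring
  · funext ⟨t, x, u, g⟩
    simp only [Phi, Function.comp_apply, id_eq, Prod.mk.injEq]
    refine ⟨?_, ?_, ?_, ?_⟩ <;> field_simp <;> (try subst hD) <;> ring
end

section
/- Let v be a C² solution of v_s = v_y·v_{yy} + v² + 1 on the strip (−π/2, π/2) × ℝ. Define u : ℝ² → ℝ by u(t, x) = (v(arctan t, x) − t)/(t² + 1). Then u is a C² solution of u_t = u_x·u_{xx} + u² on ℝ². -/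
/-!
Writing `s = arctan t`, one has `s_t = 1 / (1 + t²)`, so the chain and quotient rules give
`(t² + 1)² u_t = v_s - (t² + 1) - 2 t (v - t)`, while `x`-derivatives of `u` are those of `v`
divided by `t² + 1`. Substituting `v_s = v_y v_yy + v² + 1` turns the right-hand side into
`v_y v_yy + (v - t)²`, which is `(t² + 1)² (u_x u_xx + u²)`. Smoothness holds because `arctan`
is smooth with values in `(-π/2, π/2)` and `t² + 1` never vanishes.
-/

open Real

/-- The point transformation t̃ = arctan t, x̃ = x, ũ = (t² + 1)u + t maps solutions
of `v_s = v_y v_yy + v² + 1` on the strip (−π/2, π/2) × ℝ to solutions of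
`u_t = u_x u_xx + u²` on ℝ². -/
theorem case6b_to_case6a
    (v : ℝ → ℝ → ℝ)
    (hv : ContDiffOn ℝ 2 (fun p : ℝ × ℝ => v p.1 p.2)
      (Set.Ioo (-(π / 2)) (π / 2) ×ˢ (Set.univ : Set ℝ)))
    (hvpde : ∀ s ∈ Set.Ioo (-(π / 2)) (π / 2), ∀ y : ℝ,
      pt v s y = px v s y * pxx v s y + (v s y) ^ 2 + 1)
    (u : ℝ → ℝ → ℝ)
    (hu : ∀ t x, u t x = (v (arctan t) x - t) / (t ^ 2 + 1)) :
    ContDiff ℝ 2 (fun p : ℝ × ℝ => u p.1 p.2) ∧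
    ∀ t x, pt u t x = px u t x * pxx u t x + (u t x) ^ 2 := by
  have hmem : ∀ t : ℝ, arctan t ∈ Set.Ioo (-(π / 2)) (π / 2) := arctan_mem_Ioo
  have hne : ∀ t : ℝ, t ^ 2 + 1 ≠ 0 := fun t => by positivity
  -- `u` is a quotient of `C²` functions, since `(t, x) ↦ (arctan t, x)` maps into the strip.
  have hcd : ContDiff ℝ 2 (fun p : ℝ × ℝ => u p.1 p.2) := by
    have hφ : ContDiff ℝ 2 (fun p : ℝ × ℝ => (arctan p.1, p.2)) :=
      (contDiff_arctan.comp contDiff_fst).prodMk contDiff_snd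
    have hcomp : ContDiff ℝ 2 (fun p : ℝ × ℝ => v (arctan p.1) p.2) :=
      hv.comp_contDiff hφ fun p => ⟨hmem p.1, Set.mem_univ _⟩
    simp only [hu]
    exact (hcomp.sub contDiff_fst).div ((contDiff_fst.pow 2).add contDiff_const)
      fun p => hne p.1
  refine ⟨hcd, fun t x => ?_⟩
  have hdiff : DifferentiableAt ℝ (fun s => v s x) (arctan t) := by
    have hopen : IsOpen (Set.Ioo (-(π / 2)) (π / 2) ×ˢ (Set.univ : Set ℝ)) :=
      isOpen_Ioo.prod isOpen_univ
    have hat : DifferentiableAt ℝ (fun p : ℝ × ℝ => v p.1 p.2) (arctan t, x) :=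
      (hv.contDiffAt (hopen.mem_nhds ⟨hmem t, Set.mem_univ _⟩)).differentiableAt (by norm_num)
    have hline : DifferentiableAt ℝ (fun s : ℝ => (s, x)) (arctan t) :=
      differentiableAt_id.prodMk (differentiableAt_const x)
    exact DifferentiableAt.comp (g := fun p : ℝ × ℝ => v p.1 p.2) (arctan t) hat hline
  have hpt : pt u t x = ((pt v (arctan t) x * (1 / (1 + t ^ 2)) - 1) * (t ^ 2 + 1)
      - (v (arctan t) x - t) * (2 * t)) / (t ^ 2 + 1) ^ 2 := by
    have hnum : HasDerivAt (fun s => v (arctan s) x - s)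
        (pt v (arctan t) x * (1 / (1 + t ^ 2)) - 1) t :=
      (hdiff.hasDerivAt.comp t (hasDerivAt_arctan t)).sub (hasDerivAt_id t)
    have hden : HasDerivAt (fun s : ℝ => s ^ 2 + 1) (2 * t) t := by
      simpa using (hasDerivAt_pow 2 t).add_const 1
    have hquot := (hnum.div hden (hne t)).deriv
    simp only [pt, hu] at hquot ⊢
    exact hquot
  -- In `x` the transformation is affine with constant coefficients, so these two identities
  -- need no differentiability.
  have hpx : ∀ y, px u t y = px v (arctan t) y / (t ^ 2 + 1) := fun y => by
    simp only [px, hu, deriv_div_const, deriv_sub_const]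
  have hpxx : pxx u t x = pxx v (arctan t) x / (t ^ 2 + 1) := by
    simp only [pxx, hu, deriv_div_const, deriv_sub_const]
  rw [hpt, hpx, hpxx, hu, hvpde _ (hmem t) x]
  have h1 := hne t
  have h2 : 1 + t ^ 2 ≠ 0 := by positivity
  field_simp
  ring
end

section
/- Let v be a C² solution of v_s = v_y·v_{yy} + v² − 1 on ℝ². Define u on (1, ∞) × ℝ by u(t, x) = (v((1/2)·ln((t − 1)/(t + 1)), x) − t)/(t² − 1). Then u is a C² solution of u_t = u_x·u_{xx} + u² on (1, ∞) × ℝ. -/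
/-!
Write `D = t² - 1` and `σ(t) = (1/2) log ((t - 1) / (t + 1))`, so that `σ' = 1 / D` on `(1, ∞)`.
With `u = (v(σ(t), x) - t) / D`, the space derivatives are `u_x = v_y / D` and `u_xx = v_yy / D`,
and the chain rule gives `D² u_t = v_s - D - 2 t (v - t)`. Substituting
`v_s = v_y v_yy + v² - 1` turns the right-hand side into `v_y v_yy + (v - t)²`,
which is `D² (u_x u_xx + u²)`.
-/

open Real

theorem hasDerivAt_timeChange {t : ℝ} (ht : 1 < t) :
    HasDerivAt (fun s : ℝ => (1 / 2) * Real.log ((s - 1) / (s + 1))) (1 / (t ^ 2 - 1)) t := by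
  have h1 : t - 1 ≠ 0 := by linarith
  have h2 : t + 1 ≠ 0 := by linarith
  have h3 : t ^ 2 - 1 ≠ 0 := by nlinarith
  have h := ((((hasDerivAt_id t).sub_const 1).div ((hasDerivAt_id t).add_const 1) h2).log
    (div_ne_zero h1 h2)).const_mul (1 / 2)
  refine h.congr_deriv ?_
  simp only [id, Pi.div_apply]
  field_simp
  ring

/-- The point transformation t̃ = (1/2)ln((t − 1)/(t + 1)), x̃ = x,
ũ = (t² − 1)u + t maps solutions of `v_s = v_y v_yy + v² − 1` on ℝ² to solutions
of `u_t = u_x u_xx + u²` on (1, ∞) × ℝ. -/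
theorem case6c_to_case6a
    (v : ℝ → ℝ → ℝ)
    (hv : ContDiff ℝ 2 (fun p : ℝ × ℝ => v p.1 p.2))
    (hvpde : ∀ s y : ℝ, pt v s y = px v s y * pxx v s y + (v s y) ^ 2 - 1)
    (u : ℝ → ℝ → ℝ)
    (hu : ∀ t x, u t x = (v ((1 / 2) * Real.log ((t - 1) / (t + 1))) x - t) / (t ^ 2 - 1)) :
    ContDiffOn ℝ 2 (fun p : ℝ × ℝ => u p.1 p.2)
      (Set.Ioi (1 : ℝ) ×ˢ (Set.univ : Set ℝ)) ∧
    ∀ t ∈ Set.Ioi (1 : ℝ), ∀ x : ℝ,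
      pt u t x = px u t x * pxx u t x + (u t x) ^ 2 := by
  obtain rfl : u = fun t x =>
      (v ((1 / 2) * Real.log ((t - 1) / (t + 1))) x - t) / (t ^ 2 - 1) := by
    funext t x
    exact hu t x
  clear hu
  constructor
  · intro p hp
    have ht : 1 < p.1 := hp.1
    have h1 : p.1 - 1 ≠ 0 := by linarith
    have h2 : p.1 + 1 ≠ 0 := by linarith
    have h3 : p.1 ^ 2 - 1 ≠ 0 := by nlinarith
    have hσ : ContDiffAt ℝ 2
        (fun p : ℝ × ℝ => (1 / 2) * Real.log ((p.1 - 1) / (p.1 + 1))) p :=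
      contDiffAt_const.mul (((contDiffAt_fst.sub contDiffAt_const).div
        (contDiffAt_fst.add contDiffAt_const) h2).log (div_ne_zero h1 h2))
    have hcomp : ContDiffAt ℝ 2
        (fun p : ℝ × ℝ => v ((1 / 2) * Real.log ((p.1 - 1) / (p.1 + 1))) p.2) p :=
      hv.contDiffAt.comp p (hσ.prodMk contDiffAt_snd)
    exact ((hcomp.sub contDiffAt_fst).div
      ((contDiffAt_fst.pow 2).sub contDiffAt_const) h3).contDiffWithinAt
  · intro t ht x
    have ht : 1 < t := ht
    have h3 : t ^ 2 - 1 ≠ 0 := by nlinarith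
    have hpde := hvpde ((1 / 2) * Real.log ((t - 1) / (t + 1))) x
    have hvs : Differentiable ℝ (fun s => v s x) :=
      (hv.differentiable two_ne_zero).comp (differentiable_id.prodMk (differentiable_const x))
    have hd : HasDerivAt (fun s => v ((1 / 2) * Real.log ((s - 1) / (s + 1))) x)
        (pt v ((1 / 2) * Real.log ((t - 1) / (t + 1))) x * (1 / (t ^ 2 - 1))) t :=
      (hvs _).hasDerivAt.comp t (hasDerivAt_timeChange ht)
    have hut := ((hd.sub (hasDerivAt_id t)).div
      (((hasDerivAt_id t).pow 2).sub_const 1) h3).deriv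
    rw [hpde] at hut
    refine Eq.trans hut ?_
    simp only [px, pxx, deriv_div_const, deriv_sub_const, Pi.sub_apply, Pi.pow_apply, id]
    field_simp
    ring
end

section
/- Let n, ε be real constants with n ≠ 0 and ε ≠ 0. Let u : ℝ² → ℝ be a C² solution of u_t = |u_x|ⁿ·u_xx + |u|^{n+1} + ε·u, and let v be a C² function on an open subset of ℝ² such that v(e^{εnt}/(εn), x) = e^{−εt}·u(t, x) for all (t, x) ∈ ℝ². Then at every point (s, x) with s = e^{εnt}/(εn), the function v satisfies v_s(s, x) = |v_x(s, x)|ⁿ·v_{xx}(s, x) + |v(s, x)|^{n+1}. -/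
/-!
Put `s(t) = e^{εnt}/(εn)`, so `s'(t) = e^{εnt}`. For fixed `t` the relation `v(s(t), ·) = e^{-εt} u(t, ·)`
is an identity of functions of `x`, so `v_x = e^{-εt} u_x` and `v_xx = e^{-εt} u_xx`. For fixed `x`,
differentiating in `t` gives `e^{εnt} v_s = e^{-εt} (u_t - ε u)`; here the `C²` regularity of `v` near the
point enters through the chain rule. Since `u_t - ε u = |u_x|ⁿ u_xx + |u|^{n+1}`, which is homogeneous of
degree `n + 1` in `u`, multiplying by `e^{-εnt}` turns the factor `e^{-εt}` into `e^{-ε(n+1)t}`, exactly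
what the right-hand side of the equation for `v` produces.
-/


open Real

/-- The transformation t̃ = e^{εnt}/(εn), x̃ = x, ũ = e^{−εt}u maps solutions of
`u_t = |u_x|ⁿ u_xx + |u|^{n+1} + εu` to solutions of `v_s = |v_x|ⁿ v_xx + |v|^{n+1}`. -/
theorem case5b_to_case5a
    (n ε : ℝ) (hn : n ≠ 0) (hε : ε ≠ 0)
    (u : ℝ → ℝ → ℝ)
    (hu : ContDiff ℝ 2 (fun p : ℝ × ℝ => u p.1 p.2))
    (hpde : ∀ t x,
      pt u t x = |px u t x| ^ n * pxx u t x + |u t x| ^ (n + 1) + ε * u t x)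
    (Ω' : Set (ℝ × ℝ)) (hΩ' : IsOpen Ω')
    (v : ℝ → ℝ → ℝ)
    (hv : ContDiffOn ℝ 2 (fun p : ℝ × ℝ => v p.1 p.2) Ω')
    (hmem : ∀ t x : ℝ, (Real.exp (ε * n * t) / (ε * n), x) ∈ Ω')
    (hrel : ∀ t x : ℝ,
      v (Real.exp (ε * n * t) / (ε * n)) x = Real.exp (-(ε * t)) * u t x) :
    ∀ t x : ℝ,
      pt v (Real.exp (ε * n * t) / (ε * n)) x =
        |px v (Real.exp (ε * n * t) / (ε * n)) x| ^ n *
            pxx v (Real.exp (ε * n * t) / (ε * n)) x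
          + |v (Real.exp (ε * n * t) / (ε * n)) x| ^ (n + 1) := by
  intro t x
  have hu_t : HasDerivAt (fun s => u s x) (pt u t x) t := by
    have h : DifferentiableAt ℝ (fun s => u s x) t :=
      ((hu.differentiable (by norm_num)).comp
        (differentiable_id.prodMk (differentiable_const x))).differentiableAt
    exact h.hasDerivAt
  have hv_s : HasDerivAt (fun s => v s x) (pt v (Real.exp (ε * n * t) / (ε * n)) x)
      (Real.exp (ε * n * t) / (ε * n)) := by
    have h1 : DifferentiableAt ℝ (fun p : ℝ × ℝ => v p.1 p.2)
        (Real.exp (ε * n * t) / (ε * n), x) :=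
      (hv.contDiffAt (hΩ'.mem_nhds (hmem t x))).differentiableAt (by norm_num)
    have h : DifferentiableAt ℝ (fun s => v s x) (Real.exp (ε * n * t) / (ε * n)) :=
      DifferentiableAt.comp (g := fun p : ℝ × ℝ => v p.1 p.2) (f := fun s : ℝ => (s, x)) _ h1
        (differentiableAt_id.prodMk (differentiableAt_const x))
    exact h.hasDerivAt
  have hs : HasDerivAt (fun t => Real.exp (ε * n * t) / (ε * n)) (Real.exp (ε * n * t)) t := by
    have h := (((hasDerivAt_id t).const_mul (ε * n)).exp).div_const (ε * n)
    refine h.congr_deriv ?_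
    simp only [id]
    field_simp
  have he : HasDerivAt (fun t => Real.exp (-(ε * t))) (Real.exp (-(ε * t)) * (-ε)) t := by
    have h := (((hasDerivAt_id t).const_mul ε).neg).exp
    refine h.congr_deriv ?_
    simp
  have hchain : pt v (Real.exp (ε * n * t) / (ε * n)) x * Real.exp (ε * n * t)
      = Real.exp (-(ε * t)) * (-ε) * u t x + Real.exp (-(ε * t)) * pt u t x := by
    have h1 := HasDerivAt.comp t hv_s hs
    have h2 := he.mul hu_t
    have h3 : ((fun s => v s x) ∘ fun t => Real.exp (ε * n * t) / (ε * n))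
        = (fun t => Real.exp (-(ε * t))) * (fun s => u s x) := by
      funext r
      exact hrel r x
    rw [h3] at h1
    exact h1.unique h2
  have hpx : ∀ y, px v (Real.exp (ε * n * t) / (ε * n)) y
      = Real.exp (-(ε * t)) * px u t y := by
    intro y
    simp only [px, hrel, deriv_const_mul_field']
  have hpxx : pxx v (Real.exp (ε * n * t) / (ε * n)) x
      = Real.exp (-(ε * t)) * pxx u t x := by
    simp only [pxx, hrel, deriv_const_mul_field']
  rw [hpx, hpxx, hrel, abs_mul, abs_mul, Real.abs_exp,
    Real.mul_rpow (Real.exp_pos _).le (abs_nonneg _),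
    Real.mul_rpow (Real.exp_pos _).le (abs_nonneg _),
    Real.rpow_add_one (Real.exp_pos _).ne', ← Real.exp_mul]
  rw [hpde] at hchain
  have hE : Real.exp (-(ε * t) * n) * Real.exp (ε * n * t) = 1 := by
    rw [← Real.exp_add, show -(ε * t) * n + ε * n * t = 0 by ring, Real.exp_zero]
  linear_combination Real.exp (-(ε * t) * n) * hchain
    - pt v (Real.exp (ε * n * t) / (ε * n)) x * hE
end

section
/- Let κ be a real constant and φ : ℝ → ℝ a C² function. Define u : ℝ² → ℝ by u(t, x) = (φ(x − κ·arctan t) − t)/(t² + 1). Then u satisfies u_t = u_x·u_{xx} + u² at a point (t, x) if and only if φ′(ω)·φ″(ω) + φ(ω)² + κ·φ′(ω) + 1 = 0 at ω = x − κ·arctan t. In particular, u is a solution on all of ℝ² if and only if φ′·φ″ + φ² + κ·φ′ + 1 = 0 on all of ℝ. -/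
/-!
With `ω = x - κ arctan t`, the chain rule gives `u_x = φ'(ω) / (t² + 1)`, `u_xx = φ''(ω) / (t² + 1)`
and `u_t = (-κ φ'(ω) - (t² + 1) - 2t (φ(ω) - t)) / (t² + 1)²`. Hence
`u_x u_xx + u² - u_t = (φ'(ω) φ''(ω) + φ(ω)² + κ φ'(ω) + 1) / (t² + 1)²`, and the pointwise
equivalence follows since `t² + 1 ≠ 0`. The global one follows because `ω` takes every real
value, already along `t = 0`.
-/

open Real

/-- Lie reduction of `u_t = u_x u_xx + u²` with respect to the subalgebra spanned by
(t² + 1)∂_t − (2tu + 1)∂_u + κ∂_x: the ansatz u = (φ(x − κ arctan t) − t)/(t² + 1)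
solves the PDE exactly when φ solves the reduced ODE
φ′φ″ + φ² + κφ′ + 1 = 0. -/
theorem lie_reduction_case6a_5
    (κ : ℝ) (φ : ℝ → ℝ) (hφ : ContDiff ℝ 2 φ)
    (u : ℝ → ℝ → ℝ)
    (hu : ∀ t x, u t x = (φ (x - κ * arctan t) - t) / (t ^ 2 + 1)) :
    (∀ t x : ℝ,
      pt u t x = px u t x * pxx u t x + (u t x) ^ 2 ↔
        deriv φ (x - κ * arctan t) * deriv (deriv φ) (x - κ * arctan t)
          + (φ (x - κ * arctan t)) ^ 2 + κ * deriv φ (x - κ * arctan t) + 1 = 0) ∧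
    ((∀ t x : ℝ, pt u t x = px u t x * pxx u t x + (u t x) ^ 2) ↔
      ∀ ω : ℝ,
        deriv φ ω * deriv (deriv φ) ω + (φ ω) ^ 2 + κ * deriv φ ω + 1 = 0) := by
  have hd : Differentiable ℝ φ := hφ.differentiable (by norm_num)
  have hdd : Differentiable ℝ (deriv φ) :=
    (ContDiff.deriv' (n := 1) (by simpa [one_add_one_eq_two] using hφ)).differentiable (by norm_num)
  obtain rfl : u = fun t x => (φ (x - κ * arctan t) - t) / (t ^ 2 + 1) := by
    funext t x
    exact hu t x
  have hne : ∀ t : ℝ, t ^ 2 + 1 ≠ 0 := fun t => by positivity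
  have hx : ∀ t x : ℝ, HasDerivAt (fun y => (φ (y - κ * arctan t) - t) / (t ^ 2 + 1))
      (deriv φ (x - κ * arctan t) / (t ^ 2 + 1)) x := fun t x =>
    (((hd _).hasDerivAt.comp_sub_const x (κ * arctan t)).sub_const t).div_const _
  have hxx : ∀ t x : ℝ, HasDerivAt (fun y => deriv φ (y - κ * arctan t) / (t ^ 2 + 1))
      (deriv (deriv φ) (x - κ * arctan t) / (t ^ 2 + 1)) x := fun t x =>
    ((hdd _).hasDerivAt.comp_sub_const x (κ * arctan t)).div_const _
  have ht : ∀ t x : ℝ, HasDerivAt (fun s => (φ (x - κ * arctan s) - s) / (s ^ 2 + 1))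
      ((-κ * deriv φ (x - κ * arctan t) - (t ^ 2 + 1) - 2 * t * (φ (x - κ * arctan t) - t))
        / (t ^ 2 + 1) ^ 2) t := by
    intro t x
    have hω : HasDerivAt (fun s => x - κ * arctan s) (-(κ * (1 / (1 + t ^ 2)))) t :=
      ((hasDerivAt_arctan t).const_mul κ).const_sub x
    have hφω : HasDerivAt (fun s => φ (x - κ * arctan s))
        (deriv φ (x - κ * arctan t) * -(κ * (1 / (1 + t ^ 2)))) t :=
      HasDerivAt.comp t (hd _).hasDerivAt hω
    have hden : HasDerivAt (fun s : ℝ => s ^ 2 + 1) (2 * t) t := by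
      simpa using (hasDerivAt_pow 2 t).add_const 1
    refine ((hφω.sub (hasDerivAt_id t)).div hden (hne t)).congr_deriv ?_
    have h1 := hne t
    have h2 : 1 + t ^ 2 ≠ 0 := by positivity
    simp only [Pi.sub_apply, id]
    field_simp
    ring
  have key : ∀ t x : ℝ,
      pt (fun t x => (φ (x - κ * arctan t) - t) / (t ^ 2 + 1)) t x =
        px (fun t x => (φ (x - κ * arctan t) - t) / (t ^ 2 + 1)) t x *
          pxx (fun t x => (φ (x - κ * arctan t) - t) / (t ^ 2 + 1)) t x +
          ((φ (x - κ * arctan t) - t) / (t ^ 2 + 1)) ^ 2 ↔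
        deriv φ (x - κ * arctan t) * deriv (deriv φ) (x - κ * arctan t)
          + (φ (x - κ * arctan t)) ^ 2 + κ * deriv φ (x - κ * arctan t) + 1 = 0 := by
    intro t x
    have hux : (fun y => deriv (fun z => (φ (z - κ * arctan t) - t) / (t ^ 2 + 1)) y) =
        fun y => deriv φ (y - κ * arctan t) / (t ^ 2 + 1) := funext fun y => (hx t y).deriv
    simp only [pt, px, pxx]
    rw [hux, (hxx t x).deriv, (hx t x).deriv, (ht t x).deriv, div_pow, div_mul_div_comm, ← sq,
      ← add_div, div_left_inj' (pow_ne_zero 2 (hne t))]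
    constructor <;> intro h <;> linear_combination -h
  refine ⟨key, fun h ω => ?_, fun h t x => (key t x).2 (h _)⟩
  simpa using (key 0 ω).1 (h 0 ω)
end

section
/- Let ε ≠ 0 be a real constant and φ : ℝ → ℝ a C² function. Define u : ℝ² → ℝ by u(t, x) = φ(x − t²/2) + t/ε. Then u satisfies u_t = u_x·u_{xx} − ε·u·u_x at a point (t, x) if and only if φ′(ω)·(φ″(ω) − ε·φ(ω)) = 1/ε at ω = x − t²/2. In particular, u is a solution on all of ℝ² if and only if φ′·(φ″ − ε·φ) = 1/ε on all of ℝ. -/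
/-- Lie reduction of `u_t = u_x u_xx − ε u u_x` with respect to the subalgebra
spanned by ∂_t + t∂_x + ε⁻¹∂_u: the ansatz u = φ(x − t²/2) + t/ε solves the PDE
exactly when φ solves the reduced ODE φ′(φ″ − εφ) = 1/ε. -/
theorem lie_reduction_peculiar_4
    (ε : ℝ) (hε : ε ≠ 0) (φ : ℝ → ℝ) (hφ : ContDiff ℝ 2 φ)
    (u : ℝ → ℝ → ℝ)
    (hu : ∀ t x, u t x = φ (x - t ^ 2 / 2) + t / ε) :
    (∀ t x : ℝ,
      pt u t x = px u t x * pxx u t x - ε * u t x * px u t x ↔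
        deriv φ (x - t ^ 2 / 2) *
            (deriv (deriv φ) (x - t ^ 2 / 2) - ε * φ (x - t ^ 2 / 2)) = 1 / ε) ∧
    ((∀ t x : ℝ, pt u t x = px u t x * pxx u t x - ε * u t x * px u t x) ↔
      ∀ ω : ℝ, deriv φ ω * (deriv (deriv φ) ω - ε * φ ω) = 1 / ε) := by
  have hφd : ∀ ω, HasDerivAt φ (deriv φ ω) ω := fun ω =>
    (hφ.differentiable (by norm_num) ω).hasDerivAt
  have hpx : ∀ t x, px u t x = deriv φ (x - t ^ 2 / 2) := by
    intro t x
    simp only [px, hu, deriv_add_const, deriv_comp_sub_const]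
  have hpxx : ∀ t x, pxx u t x = deriv (deriv φ) (x - t ^ 2 / 2) := by
    intro t x
    simp only [pxx, hu, deriv_add_const, deriv_comp_sub_const]
  have hpt : ∀ t x, pt u t x = -t * deriv φ (x - t ^ 2 / 2) + 1 / ε := by
    intro t x
    simp only [pt, hu]
    have hω : HasDerivAt (fun s : ℝ => x - s ^ 2 / 2) (-t) t := by
      refine ((((hasDerivAt_id' t).pow 2).div_const 2).const_sub x).congr_deriv ?_
      norm_num
    have h := ((hφd (x - t ^ 2 / 2)).comp t hω).add ((hasDerivAt_id' t).div_const ε)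
    refine HasDerivAt.deriv (h.congr_deriv ?_)
    ring
  have key : ∀ t x : ℝ,
      pt u t x = px u t x * pxx u t x - ε * u t x * px u t x ↔
        deriv φ (x - t ^ 2 / 2) *
            (deriv (deriv φ) (x - t ^ 2 / 2) - ε * φ (x - t ^ 2 / 2)) = 1 / ε := by
    intro t x
    rw [hpt, hpx, hpxx, hu]
    have ht : ε * (t / ε) = t := mul_div_cancel₀ t hε
    constructor <;> intro h <;>
      linear_combination -h + deriv φ (x - t ^ 2 / 2) * ht
  refine ⟨key, fun h ω => ?_, fun h t x => (key t x).2 (h _)⟩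
  simpa using (key 0 ω).1 (h 0 ω)
end

section
/- Let ε ∈ {−1, 1} and c₁, c₂ be real constants. Let F : ℝ → ℝ be the function F(ω) = ∫₀^ω e^{ε s²/2} ds, and let I ⊆ ℝ be an open interval on which F(ω) + c₁ > 0. Then the function φ : I → ℝ defined by φ(ω) = ln(F(ω) + c₁) + c₂ satisfies the ODE φ″(ω) = φ′(ω)·(ε·ω − φ′(ω)) for all ω ∈ I. -/
/-! With `E ω = exp (ε ω² / 2)`, the fundamental theorem of calculus gives `F' = E`, and the chain
rule gives `E' = ε ω E`. Hence `φ' = E / (F + c₁)` on `I`, and the quotient rule yields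
`φ'' = ε ω E / (F + c₁) - (E / (F + c₁))² = φ' (ε ω - φ')`. -/

open Real

/-- On any open interval where F(ω) + c₁ > 0, with F(ω) = ∫₀^ω e^{εs²/2} ds and
ε = ±1, the function φ(ω) = ln(F(ω) + c₁) + c₂ solves the reduced ODE
φ″ = φ′(εω − φ′) obtained by Lie reduction of `u_t = u_xx/(u_x + 1) + εu`. -/
theorem reduced_equation_solution_case5_4
    (ε : ℝ) (hε : ε = 1 ∨ ε = -1) (c₁ c₂ : ℝ)
    (F : ℝ → ℝ) (hF : ∀ ω : ℝ, F ω = ∫ s in (0 : ℝ)..ω, Real.exp (ε * s ^ 2 / 2))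
    (I : Set ℝ) (hIopen : IsOpen I) (hIinterval : I.OrdConnected)
    (hpos : ∀ ω ∈ I, F ω + c₁ > 0)
    (φ : ℝ → ℝ) (hφ : ∀ ω : ℝ, φ ω = Real.log (F ω + c₁) + c₂) :
    ∀ ω ∈ I, deriv (deriv φ) ω = deriv φ ω * (ε * ω - deriv φ ω) := by
  set E : ℝ → ℝ := fun s => Real.exp (ε * s ^ 2 / 2) with hE
  have hEcont : Continuous E := by fun_prop
  have hF' : ∀ x, HasDerivAt F (E x) x := by
    intro x
    rw [funext hF]
    exact intervalIntegral.integral_hasDerivAt_right (hEcont.intervalIntegrable _ _)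
      (hEcont.stronglyMeasurableAtFilter _ _) hEcont.continuousAt
  have hE' : ∀ x, HasDerivAt E (ε * x * E x) x := by
    intro x
    have h : HasDerivAt (fun s : ℝ => ε * s ^ 2 / 2) (ε * x) x := by
      refine (((hasDerivAt_pow 2 x).const_mul ε).div_const 2).congr_deriv ?_
      push_cast
      ring
    exact h.exp.congr_deriv (mul_comm _ _)
  have hφ' : ∀ x ∈ I, deriv φ x = E x / (F x + c₁) := by
    intro x hx
    rw [funext hφ]
    exact ((((hF' x).add_const c₁).log (hpos x hx).ne').add_const c₂).deriv
  intro ω hω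
  have hne : F ω + c₁ ≠ 0 := (hpos ω hω).ne'
  -- The formula for `φ'` holds near `ω` because `I` is open, so it may be differentiated at `ω`.
  have hev : deriv φ =ᶠ[nhds ω] fun x => E x / (F x + c₁) := by
    filter_upwards [hIopen.mem_nhds hω] with x hx using hφ' x hx
  rw [hev.deriv_eq, ((hE' ω).fun_div ((hF' ω).add_const c₁) hne).deriv, hφ' ω hω]
  field_simp
end

section
/- Let τ⁰, τ¹, τ² : ℝ → ℝ be differentiable functions and define u : ℝ² → ℝ by u(t, x) = τ⁰(t) + τ¹(t)·eˣ + τ²(t)·e^{−x}. Then u satisfies u_t = u_x·u_{xx} − u·u_x on all of ℝ² if and only if for all t ∈ ℝ: (τ⁰)′(t) = 0, (τ¹)′(t) = −τ⁰(t)·τ¹(t), and (τ²)′(t) = τ⁰(t)·τ²(t). -/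
/-!
The ansatz has `u_x = τ1 eˣ - τ2 e⁻ˣ` and `u_xx = u - τ0`, so the right-hand side `u_x (u_xx - u)`
collapses to `-τ0 (τ1 eˣ - τ2 e⁻ˣ)`, while `u_t` is the combination of `1`, `eˣ`, `e⁻ˣ` whose
coefficients are the derivatives of `τ0`, `τ1`, `τ2`. The PDE is therefore an identity in the span
of these three functions, and their linear independence (`coeffs_eq_zero_of_exp_comb`) lets one
compare coefficients.
-/

open Real

/-- The functions `1`, `eˣ`, `e⁻ˣ` are linearly independent. -/
lemma coeffs_eq_zero_of_exp_comb {a b c : ℝ}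
    (h : ∀ x : ℝ, a + b * Real.exp x + c * Real.exp (-x) = 0) :
    a = 0 ∧ b = 0 ∧ c = 0 := by
  -- Evaluating where `eˣ` is `1`, `2`, `1/2` gives a nonsingular linear system.
  have h0 := h 0
  have h1 := h (Real.log 2)
  have h2 := h (-Real.log 2)
  have e : Real.exp (Real.log 2) = 2 := Real.exp_log two_pos
  simp only [neg_neg, neg_zero, Real.exp_zero, Real.exp_neg, e] at h0 h1 h2
  refine ⟨?_, ?_, ?_⟩ <;> linarith

lemma hasDerivAt_exp_comb (a b c x : ℝ) :
    HasDerivAt (fun y => a + b * Real.exp y + c * Real.exp (-y))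
      (b * Real.exp x - c * Real.exp (-x)) x := by
  have h := (((Real.hasDerivAt_exp x).const_mul b).const_add a).add
    ((hasDerivAt_neg x).exp.const_mul c)
  refine h.congr_deriv ?_
  ring

/-- Generalized separation of variables for `u_t = u_x u_xx − u u_x`: the ansatz
u = τ0(t) + τ1(t)eˣ + τ2(t)e⁻ˣ solves the PDE exactly when the coefficient
functions solve (τ0)′ = 0, (τ1)′ = −τ0τ1, (τ2)′ = τ0τ2. -/
theorem generalized_separation_exponential
    (τ0 τ1 τ2 : ℝ → ℝ)
    (hτ0 : Differentiable ℝ τ0) (hτ1 : Differentiable ℝ τ1)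
    (hτ2 : Differentiable ℝ τ2)
    (u : ℝ → ℝ → ℝ)
    (hu : ∀ t x, u t x = τ0 t + τ1 t * Real.exp x + τ2 t * Real.exp (-x)) :
    (∀ t x : ℝ, pt u t x = px u t x * pxx u t x - u t x * px u t x) ↔
      ∀ t : ℝ,
        deriv τ0 t = 0 ∧ deriv τ1 t = -(τ0 t) * τ1 t ∧
          deriv τ2 t = τ0 t * τ2 t := by
  have hpt : ∀ t x, pt u t x =
      deriv τ0 t + deriv τ1 t * Real.exp x + deriv τ2 t * Real.exp (-x) := by
    intro t x
    simp only [pt, hu]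
    exact (((hτ0 t).hasDerivAt.add ((hτ1 t).hasDerivAt.mul_const _)).add
      ((hτ2 t).hasDerivAt.mul_const _)).deriv
  have hpx : ∀ t x, px u t x = τ1 t * Real.exp x - τ2 t * Real.exp (-x) := by
    intro t x
    simp only [px, hu]
    exact (hasDerivAt_exp_comb _ _ _ x).deriv
  have hpxx : ∀ t x, pxx u t x = τ1 t * Real.exp x + τ2 t * Real.exp (-x) := by
    intro t x
    have hfun : (fun y => deriv (fun z => u t z) y) =
        fun y => 0 + τ1 t * Real.exp y + (-τ2 t) * Real.exp (-y) := by
      funext y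
      have := hpx t y
      simp only [px] at this
      rw [this]
      ring
    simp only [pxx]
    rw [hfun, (hasDerivAt_exp_comb _ _ _ x).deriv]
    ring
  simp only [hpt, hpx, hpxx, hu]
  constructor
  · intro h t
    obtain ⟨h0, h1, h2⟩ := coeffs_eq_zero_of_exp_comb
      (a := deriv τ0 t) (b := deriv τ1 t + τ0 t * τ1 t) (c := deriv τ2 t - τ0 t * τ2 t)
      (fun x => by linear_combination h t x)
    exact ⟨h0, by linarith, by linarith⟩
  · intro h t x
    obtain ⟨h0, h1, h2⟩ := h t
    rw [h0, h1, h2]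
    ring
end

section
/- For any real constants c₀, c₁, c₂, the function u : ℝ² → ℝ defined by u(t, x) = c₀ + c₁·cos(x + c₀·t + c₂) is a C² solution of u_t = u_x·u_{xx} + u·u_x on all of ℝ². -/
/-! The wave `u = c₀ + c₁ cos θ` with phase `θ = x + c₀ t + c₂` satisfies `u_t = c₀ u_x`, since it
depends on `(t, x)` only through `x + c₀ t`, and `u_xx + u = c₀`, since cosine solves `f'' + f = 0`.
Hence `u_x u_xx + u u_x = u_x (u_xx + u) = c₀ u_x = u_t`. -/

open Real

/-- The three-parameter family u = c₀ + c₁ cos(x + c₀t + c₂) of exact solutions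
of the equation `u_t = u_x u_xx + u u_x`. -/
theorem exact_solutions_trigonometric
    (c₀ c₁ c₂ : ℝ)
    (u : ℝ → ℝ → ℝ)
    (hu : ∀ t x, u t x = c₀ + c₁ * Real.cos (x + c₀ * t + c₂)) :
    ContDiff ℝ 2 (fun p : ℝ × ℝ => u p.1 p.2) ∧
    ∀ t x : ℝ, pt u t x = px u t x * pxx u t x + u t x * px u t x := by
  obtain rfl : u = fun t x => c₀ + c₁ * Real.cos (x + c₀ * t + c₂) := by
    funext t x
    exact hu t x
  refine ⟨by fun_prop, fun t x => ?_⟩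
  have h_t : HasDerivAt (fun s => c₀ + c₁ * Real.cos (x + c₀ * s + c₂))
      (c₁ * (-Real.sin (x + c₀ * t + c₂) * (c₀ * 1))) t :=
    ((((((hasDerivAt_id t).const_mul c₀).const_add x).add_const c₂).cos).const_mul c₁).const_add c₀
  have h_x (y : ℝ) : HasDerivAt (fun z => c₀ + c₁ * Real.cos (z + c₀ * t + c₂))
      (c₁ * (-Real.sin (y + c₀ * t + c₂) * 1)) y :=
    (((((hasDerivAt_id y).add_const (c₀ * t)).add_const c₂).cos).const_mul c₁).const_add c₀
  have h_xx : HasDerivAt (fun y => c₁ * (-Real.sin (y + c₀ * t + c₂) * 1))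
      (c₁ * (-(Real.cos (x + c₀ * t + c₂) * 1) * 1)) x :=
    (((((hasDerivAt_id x).add_const (c₀ * t)).add_const c₂).sin.fun_neg).mul_const 1).const_mul c₁
  simp only [pt, px, pxx]
  -- the first `x`-derivative is computed at every point, so it can be rewritten under the outer one
  rw [h_t.deriv, funext fun y => (h_x y).deriv, h_xx.deriv]
  beta_reduce
  ring
end
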